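/- arXiv:2003.05535 — 2 statements merged into one kernel-verified Lean document; each statement's English description precedes it below -/
import Mathlib

section
/- Let D ⊆ Ĉ be a domain whose boundary ∂D is locally connected. Let z ∈ ℂ and 0 < r₁ < r₂. Then any set of connected components of D ∩ B(z,r₁) whose points are pairwise disconnected in D ∩ B(z,r₂) (i.e. which lie in pairwise distinct connected components of D ∩ B(z,r₂)) is finite. -/
open Set Filter Metric Topology

theorem exp_const {α : Type*} [TopologicalSpace α] {A : Set α} (hA : IsPreconnected A)
    {f : α → ℂ} (hf : ContinuousOn f A) (h1 : ∀ a ∈ A, Complex.exp (f a) = 1)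
    {x y : α} (hx : x ∈ A) (hy : y ∈ A) : f x = f y := by
  let φ : α → ℝ := fun a => (f a).im / (2 * Real.pi)
  have hφ : ContinuousOn φ A := by
    have : ContinuousOn (fun a => (f a).im) A := Complex.continuous_im.comp_continuousOn hf
    exact this.div_const _
  have hint : ∀ a ∈ A, ∃ n : ℤ, φ a = n ∧ f a = n * (2 * Real.pi * Complex.I) := by
    intro a ha
    obtain ⟨n, hn⟩ := Complex.exp_eq_one_iff.1 (h1 a ha)
    refine ⟨n, ?_, hn⟩
    simp only [φ, hn]
    simp
  have hpre := (hA.image φ hφ).ordConnected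
  have key : ∀ a ∈ A, ∀ b ∈ A, ¬ (φ a < φ b) := by
    intro a ha b hb hlt
    obtain ⟨n, hn, -⟩ := hint a ha
    obtain ⟨m, hm, -⟩ := hint b hb
    have hnm : n < m := by rw [hn, hm] at hlt; exact_mod_cast hlt
    have hnm' : (n : ℝ) + 1 ≤ m := by exact_mod_cast hnm
    have : (n : ℝ) + 1/2 ∈ φ '' A := hpre.out (mem_image_of_mem φ ha) (mem_image_of_mem φ hb)
      ⟨by rw [hn]; linarith, by rw [hm]; linarith⟩
    obtain ⟨c, hc, hc'⟩ := this
    obtain ⟨k, hk, -⟩ := hint c hc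
    rw [hk] at hc'
    have h3 : (2 * k : ℝ) = 2 * n + 1 := by linarith
    have h4 : 2 * k = 2 * n + 1 := by exact_mod_cast h3
    omega
  obtain ⟨n, hn, hn'⟩ := hint x hx
  obtain ⟨m, hm, hm'⟩ := hint y hy
  have : φ x = φ y := le_antisymm (not_lt.1 (key y hy x hx)) (not_lt.1 (key x hx y hy))
  rw [hn, hm] at this
  have h5 : n = m := by exact_mod_cast this
  rw [hn', hm', h5]

theorem no_log (ψ : ℂ → ℂ) (hψ : Continuous ψ) (h0 : ∀ u, ψ u ≠ 0) (p : ℂ) (ρ : ℝ) (hρ : 0 < ρ)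
    (m : ℤ) (hm : m ≠ 0) (hc : ∀ u, dist u p = ρ → ψ u = (u - p) ^ m) : False := by
  obtain ⟨k, ⟨-, hk⟩, -⟩ := Complex.isCoveringMapOn_exp.existsUnique_continuousMap_lifts
    (⟨ψ, hψ⟩ : C(ℂ, ℂ)) (a₀ := 0) (e₀ := Complex.log (ψ 0)) (Complex.exp_log (h0 0)) (by simpa using h0)
  have hk' : ∀ u, Complex.exp (k u) = ψ u := fun u => congrFun hk u
  let γ : ℝ → ℂ := fun θ => p + ρ * Complex.exp (θ * Complex.I)
  have hγ : Continuous γ := by fun_prop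
  have hρ' : (ρ : ℂ) ≠ 0 := by exact_mod_cast hρ.ne'
  have hγ1 : ∀ θ, ψ (γ θ) = ρ ^ m * Complex.exp (m * (θ * Complex.I)) := by
    intro θ
    rw [hc]
    · simp only [γ, add_sub_cancel_left]
      rw [mul_zpow, Complex.exp_int_mul]
    · simp [γ, dist_eq_norm, Complex.norm_exp, abs_of_pos hρ]
  let f : ℝ → ℂ := fun θ => k (γ θ) - m * (θ * Complex.I) - k (γ 0)
  have hf : Continuous f := by fun_prop
  have := exp_const (A := univ) (f := f) isPreconnected_univ hf.continuousOn (by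
    intro θ _
    simp only [f]
    rw [Complex.exp_sub, Complex.exp_sub, hk', hk', hγ1, hγ1]
    have := Complex.exp_ne_zero (m * (θ * Complex.I))
    have h2 : (ρ : ℂ) ^ m ≠ 0 := zpow_ne_zero _ hρ'
    field_simp
    simp) (mem_univ 0) (mem_univ (2 * Real.pi))
  have hg : γ (2 * Real.pi) = γ 0 := by
    simp [γ]
  simp only [f, hg] at this
  simp [hm, Real.pi_ne_zero] at this

theorem slit_of_convex {c : ℂ} {r : ℝ} {p q u : ℂ} (hp : p ∈ ball c r) (hq : q ∈ ball c r)
    (hu : u ∉ ball c r) : (u - p) / (u - q) ∈ Complex.slitPlane := by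
  rw [Complex.mem_slitPlane_iff_not_le_zero]
  intro h
  have huq : u - q ≠ 0 := fun h => hu (by rw [sub_eq_zero.1 h]; exact hq)
  obtain ⟨t, ht, hte⟩ : ∃ t : ℝ, 0 ≤ t ∧ (u - p) / (u - q) = -(t : ℂ) := by
    rw [Complex.le_def] at h
    refine ⟨-((u - p) / (u - q)).re, by simpa using h.1, ?_⟩
    apply Complex.ext
    · simp
    · simpa using h.2
  rw [div_eq_iff huq] at hte
  apply hu
  have h1t : (0 : ℝ) < 1 + t := by linarith
  have := (convex_ball c r) hp hq (a := 1 / (1 + t)) (b := t / (1 + t)) (by positivity)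
    (by positivity) (by field_simp)
  convert this using 1
  have h1 : (1 + t : ℂ) ≠ 0 := by exact_mod_cast h1t.ne'
  simp only [Complex.real_smul]
  push_cast
  field_simp
  linear_combination hte

/-- relation -/
def fl : OnePoint ℂ → ℂ → ℂ
  | none => fun _ => 1
  | some p => fun u => u - p

def HasLog (T : Set ℂ) (x y : OnePoint ℂ) : Prop :=
  ∃ g : ℂ → ℂ, ContinuousOn g T ∧ ∀ u ∈ T, fl x u = fl y u * Complex.exp (g u)

theorem HasLog.symm {T : Set ℂ} {x y : OnePoint ℂ} (h : HasLog T x y) : HasLog T y x := by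
  obtain ⟨g, hg, h⟩ := h
  refine ⟨fun u => - g u, hg.neg, fun u hu => ?_⟩
  rw [h u hu, mul_assoc, ← Complex.exp_add]; simp

theorem HasLog.trans {T : Set ℂ} {x y w : OnePoint ℂ} (h : HasLog T x y) (h' : HasLog T y w) :
    HasLog T x w := by
  obtain ⟨g, hg, h⟩ := h
  obtain ⟨g', hg', h'⟩ := h'
  refine ⟨fun u => g' u + g u, hg'.add hg, fun u hu => ?_⟩
  rw [h u hu, h' u hu, mul_assoc, ← Complex.exp_add]

theorem hasLog_of_slit {T : Set ℂ} {p q : ℂ} (h : ∀ u ∈ T, (u - p) / (u - q) ∈ Complex.slitPlane) :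
    HasLog T p q := by
  have hq : ∀ u ∈ T, u - q ≠ 0 := by
    intro u hu h0
    have := h u hu
    simp [h0] at this
  refine ⟨fun u => Complex.log ((u - p) / (u - q)), ?_, ?_⟩
  · refine ContinuousOn.clog ?_ h
    exact ContinuousOn.div (by fun_prop) (by fun_prop) hq
  · intro u hu
    have h1 : (u - p) / (u - q) ≠ 0 := Complex.slitPlane_ne_zero (h u hu)
    change u - p = (u - q) * _
    rw [Complex.exp_log h1, mul_div_cancel₀ _ (hq u hu)]

theorem hasLog_infty {R : ℝ} {T : Set ℂ} (hT : ∀ u ∈ T, ‖u‖ ≤ R) {p : ℂ} (hp0 : p ≠ 0)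
    (hp : R < ‖p‖) : HasLog T p OnePoint.infty := by
  have hs : ∀ u ∈ T, 1 + (-(u / p)) ∈ Complex.slitPlane := by
    intro u hu
    apply Complex.mem_slitPlane_of_norm_lt_one
    rw [norm_neg, norm_div, div_lt_one (norm_pos_iff.2 hp0)]
    exact (hT u hu).trans_lt hp
  refine ⟨fun u => Complex.log (-p) + Complex.log (1 + (-(u / p))), ?_, ?_⟩
  · exact continuousOn_const.add (ContinuousOn.clog (by fun_prop) hs)
  · intro u hu
    change u - p = 1 * _
    rw [Complex.exp_add, Complex.exp_log (neg_ne_zero.2 hp0),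
      Complex.exp_log (Complex.slitPlane_ne_zero (hs u hu))]
    field_simp
    ring

theorem hasLog_of_connected {D : Set (OnePoint ℂ)} (hD : IsOpen D) (hDc : IsPreconnected D)
    {T : Set ℂ} (hT : IsCompact T) (hTD : ∀ u ∈ T, (u : OnePoint ℂ) ∉ D)
    {x y : OnePoint ℂ} (hx : x ∈ D) (hy : y ∈ D) : HasLog T x y := by
  refine hDc.induction₂ (HasLog T) ?_ (fun _ _ _ _ _ _ h h' => h.trans h')
    (fun _ _ _ _ h => h.symm) hx hy
  intro x hx
  apply eventually_nhdsWithin_of_eventually_nhds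
  induction x using OnePoint.rec with
  | infty =>
    obtain ⟨R, hR⟩ := hT.isBounded.exists_norm_le
    rw [OnePoint.nhds_infty_eq, eventually_sup]
    constructor
    · rw [eventually_map]
      have : (closedBall (0 : ℂ) (max R 0))ᶜ ∈ coclosedCompact ℂ :=
        (isCompact_closedBall 0 _).compl_mem_coclosedCompact_of_isClosed isClosed_closedBall
      filter_upwards [this] with p hp
      simp only [mem_compl_iff, mem_closedBall, dist_zero_right, not_le, max_lt_iff] at hp
      exact (hasLog_infty hR (norm_pos_iff.1 hp.2) hp.1).symm
    · change HasLog T _ _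
      exact ⟨fun _ => 0, continuousOn_const, fun u _ => by simp⟩
  | coe p =>
    rw [OnePoint.nhds_coe_eq, eventually_map]
    have hop : IsOpen ((fun u : ℂ => (u : OnePoint ℂ)) ⁻¹' D) := hD.preimage OnePoint.continuous_coe
    obtain ⟨ε, hε, hb⟩ := Metric.isOpen_iff.1 hop p hx
    filter_upwards [ball_mem_nhds p hε] with q hq
    exact hasLog_of_slit fun u hu => slit_of_convex (mem_ball_self hε) hq fun h => hTD u hu (hb h)

theorem sep_false {N : ℕ} (p : Fin N → ℂ) (q : ℂ) (m : Fin N → ℤ) (i : Fin N) (hmi : m i ≠ 0)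
    {V X : Set ℂ} (hV : IsOpen V) (hX : IsClosed X) (hfr : frontier V ⊆ X) {z : ℂ} {s : ℝ}
    (hs : 0 < s) (hVs : V ⊆ ball z s) (hpi : p i ∈ V) (hpj : ∀ j, j ≠ i → p j ∉ closure V)
    (hq : q ∉ closure V) (L : ℂ → ℂ) (hL : ContinuousOn L X)
    (hLX : ∀ u ∈ X, ∏ j, (u - p j) ^ m j = (u - q) ^ (∑ j, m j) * Complex.exp (L u)) : False := by
  classical
  obtain ⟨L', hL'⟩ := ContinuousMap.exists_restrict_eq hX (⟨X.domRestrict L, hL.domRestrict⟩ : C(X, ℂ))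
  have hL'' : ∀ u ∈ X, L' u = L u := fun u hu => congrArg (fun f : C(X, ℂ) => f ⟨u, hu⟩) hL'
  let R : ℂ → ℂ := fun u => (u - q) ^ (∑ j, m j) / ∏ j ∈ Finset.univ.erase i, (u - p j) ^ m j
  have hnp : ∀ u ∈ closure V, ∀ j, j ≠ i → u - p j ≠ 0 := by
    intro u hu j hj h
    exact hpj j hj (by rw [← sub_eq_zero.1 h]; exact hu)
  have hnq : ∀ u ∈ closure V, u - q ≠ 0 := by
    intro u hu h
    exact hq (by rw [← sub_eq_zero.1 h]; exact hu)
  have hprod : ∀ u ∈ closure V, ∏ j ∈ Finset.univ.erase i, (u - p j) ^ m j ≠ 0 := by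
    intro u hu
    rw [Finset.prod_ne_zero_iff]
    intro j hj
    exact zpow_ne_zero _ (hnp u hu j (Finset.ne_of_mem_erase hj))
  have hR : ContinuousOn R (closure V) := by
    refine ContinuousOn.div ?_ ?_ hprod
    · exact ContinuousOn.zpow₀ (by fun_prop) _ fun u hu => Or.inl (hnq u hu)
    · refine continuousOn_finsetProd _ fun j hj => ?_
      exact ContinuousOn.zpow₀ (by fun_prop) _
        fun u hu => Or.inl (hnp u hu j (Finset.ne_of_mem_erase hj))
  have hVc : closure Vᶜ = Vᶜ := hV.isClosed_compl.closure_eq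
  have hnpi : ∀ u ∈ Vᶜ, u - p i ≠ 0 := by
    intro u hu h
    exact hu (by rw [sub_eq_zero.1 h]; exact hpi)
  let ψ : ℂ → ℂ := V.piecewise (fun u => R u * Complex.exp (L' u)) (fun u => (u - p i) ^ m i)
  have hψ : Continuous ψ := by
    refine continuous_piecewise ?_ ?_ ?_
    · intro u hu
      have h1 := hLX u (hfr hu)
      have hu' := frontier_subset_closure hu
      rw [← Finset.mul_prod_erase _ _ (Finset.mem_univ i)] at h1
      simp only [R]
      rw [hL'' u (hfr hu), div_mul_eq_mul_div, ← h1, mul_div_assoc, div_self (hprod u hu'), mul_one]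
    · exact hR.mul (by fun_prop)
    · rw [hVc]
      exact ContinuousOn.zpow₀ (by fun_prop) _ fun u hu => Or.inl (hnpi u hu)
  refine no_log ψ hψ ?_ (p i) (2 * s) (by positivity) (m i) hmi ?_
  · intro u
    by_cases hu : u ∈ V
    · have hu' := subset_closure hu
      simp only [ψ, piecewise_eq_of_mem _ _ _ hu]
      exact mul_ne_zero (div_ne_zero (zpow_ne_zero _ (hnq u hu')) (hprod u hu'))
        (Complex.exp_ne_zero _)
    · simp only [ψ, piecewise_eq_of_notMem _ _ _ hu]
      exact zpow_ne_zero _ (hnpi u hu)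
  · intro u hu
    have : u ∉ V := by
      intro h
      have h1 := hVs h
      have h2 := hVs hpi
      rw [mem_ball] at h1 h2
      have := dist_triangle_right u (p i) z
      linarith
    simp only [ψ, piecewise_eq_of_notMem _ _ _ this]

theorem frontier_comp {U : Set ℂ} (hU : IsOpen U) (p : ℂ) :
    frontier (connectedComponentIn U p) ⊆ Uᶜ := by
  intro u hu huU
  have hV : IsOpen (connectedComponentIn U p) := hU.connectedComponentIn
  have hcl := frontier_subset_closure hu
  have hn : u ∉ connectedComponentIn U p := by
    rw [hV.frontier_eq] at hu; exact hu.2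
  obtain ⟨v, hv1, hv2⟩ := mem_closure_iff.1 hcl _ (hU.connectedComponentIn (x := u))
    (mem_connectedComponentIn huU)
  apply hn
  rw [connectedComponentIn_eq hv2, ← connectedComponentIn_eq hv1]
  exact mem_connectedComponentIn huU

theorem prod_log {N : ℕ} (p : Fin N → ℂ) (q : ℂ) (m : Fin N → ℤ) (u : ℂ) (hu : u - q ≠ 0)
    (g : Fin N → ℂ)
    (h : ∀ j, u - p j = (u - q) * Complex.exp (g j)) :
    ∏ j, (u - p j) ^ m j = (u - q) ^ (∑ j, m j) * Complex.exp (∑ j, m j * g j) := by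
  have hsum : ∀ t : Finset (Fin N), (u - q) ^ (∑ j ∈ t, m j) = ∏ j ∈ t, (u - q) ^ m j := by
    intro t
    induction t using Finset.induction_on with
    | empty => simp
    | insert a t ha ih => rw [Finset.sum_insert ha, Finset.prod_insert ha, zpow_add₀ hu, ih]
  rw [hsum, Complex.exp_sum, ← Finset.prod_mul_distrib]
  refine Finset.prod_congr rfl fun j _ => ?_
  rw [h j, mul_zpow, Complex.exp_int_mul]

theorem stmt_1 (D : Set (OnePoint ℂ)) (hD : IsOpen D) (hDconn : IsConnected D)
    (hlc : LocallyConnectedSpace ↥(frontier D))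
    (z : ℂ) (r₁ r₂ : ℝ) (h1 : 0 < r₁) (h12 : r₁ < r₂) :
    {C : Set (OnePoint ℂ) |
      ∃ w ∈ D ∩ ((fun u : ℂ => (u : OnePoint ℂ)) '' Metric.ball z r₁),
        C = connectedComponentIn
          (D ∩ ((fun u : ℂ => (u : OnePoint ℂ)) '' Metric.ball z r₂)) w}.Finite := by
  classical
  by_contra hinf
  have hinf : Set.Infinite _ := hinf
  let e := hinf.natEmbedding
  have he : ∀ n, ∃ q : ℂ, q ∈ ball z r₁ ∧ (q : OnePoint ℂ) ∈ D ∧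
      (e n : Set (OnePoint ℂ)) = connectedComponentIn
          (D ∩ ((fun u : ℂ => (u : OnePoint ℂ)) '' Metric.ball z r₂)) (q : OnePoint ℂ) := by
    intro n
    obtain ⟨w, ⟨hwD, q, hq, rfl⟩, hC⟩ := (e n).2
    exact ⟨q, hq, hwD, hC⟩
  choose q hqb hqD hqC using he
  have hqinj : ∀ i j, connectedComponentIn
      (D ∩ ((fun u : ℂ => (u : OnePoint ℂ)) '' Metric.ball z r₂)) (q i : OnePoint ℂ) =
      connectedComponentIn
      (D ∩ ((fun u : ℂ => (u : OnePoint ℂ)) '' Metric.ball z r₂)) (q j : OnePoint ℂ) → i = j := by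
    intro i j hij
    rw [← hqC, ← hqC] at hij
    exact e.injective (Subtype.ext hij)
  obtain ⟨s, hs1, hs2⟩ := exists_between h12
  have hs0 : 0 < s := h1.trans hs1
  let c : ℂ → OnePoint ℂ := fun u => (u : OnePoint ℂ)
  have hc : Continuous c := OnePoint.continuous_coe
  have hce : IsOpenEmbedding c := OnePoint.isOpenEmbedding_coe
  have hSD : ∀ u, u ∈ frontier D → u ∉ D := by
    intro u hu; rw [hD.frontier_eq] at hu; exact hu.2
  -- the compact set
  let S' : Set ℂ := c ⁻¹' frontier D
  have hS' : IsClosed S' := isClosed_frontier.preimage hc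
  let T : Set ℂ := closedBall z r₂ ∩ S'
  have hT : IsCompact T := (isCompact_closedBall z r₂).inter_right hS'
  have hTD : ∀ u ∈ T, c u ∉ D := fun u hu => hSD _ hu.2
  -- finitely many components
  let W : Set (frontier D) := Subtype.val ⁻¹' (c '' (ball z r₂ ∩ (closedBall z r₁)ᶜ))
  have hW : IsOpen W :=
    (hce.isOpenMap _ (isOpen_ball.inter isClosed_closedBall.isOpen_compl)).preimage
      continuous_subtype_val
  let Q : Set (frontier D) := Subtype.val ⁻¹' (c '' sphere z s)
  have hQ : IsCompact Q := by
    refine IsClosedEmbedding.isCompact_preimage ?_ ((isCompact_sphere z s).image hc)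
    exact isClosed_frontier.isClosedEmbedding_subtypeVal
  have hQW : Q ⊆ W := by
    rintro x ⟨u, hu, hux⟩
    refine ⟨u, ⟨?_, ?_⟩, hux⟩
    · rw [mem_sphere] at hu; rw [mem_ball]; linarith
    · rw [mem_sphere] at hu; simp only [mem_compl_iff, mem_closedBall]; linarith
  obtain ⟨t, htQ, ht⟩ := hQ.elim_nhds_subcover (fun x => connectedComponentIn W x)
    (fun x hx => (hW.connectedComponentIn).mem_nhds (mem_connectedComponentIn (hQW hx)))
  -- the points
  let N := Fintype.card t + 1
  let p : Fin N → ℂ := fun j => q (j + 1)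
  let b : ℂ := q 0
  have hg : ∀ j, HasLog T (p j : OnePoint ℂ) (b : OnePoint ℂ) := fun j =>
    hasLog_of_connected hD hDconn.isPreconnected hT hTD (hqD _) (hqD _)
  have hh : ∀ j, HasLog (ball z r₁)ᶜ (p j : OnePoint ℂ) (b : OnePoint ℂ) := fun j =>
    hasLog_of_slit fun u hu => slit_of_convex (hqb _) (hqb _) hu
  choose g hgc hg using hg
  choose h hhc hh using hh
  have hg : ∀ j, ∀ u ∈ T, u - p j = (u - b) * Complex.exp (g j u) := hg
  have hh : ∀ j, ∀ u ∈ (ball z r₁)ᶜ, u - p j = (u - b) * Complex.exp (h j u) := hh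
  have hb1 : ∀ u ∈ T, u - b ≠ 0 := by
    intro u hu h0
    apply hTD u hu
    rw [sub_eq_zero.1 h0]; exact hqD 0
  have hb2 : ∀ u ∈ (ball z r₁)ᶜ, u - b ≠ 0 := by
    intro u hu h0
    apply hu
    rw [sub_eq_zero.1 h0]; exact hqb 0
  have hgh1 : ∀ j, ∀ u ∈ T ∩ (ball z r₁)ᶜ, Complex.exp (g j u - h j u) = 1 := by
    intro j u hu
    have e1 := hg j u hu.1
    have e2 := hh j u hu.2
    rw [e1] at e2
    have := mul_left_cancel₀ (hb1 u hu.1) e2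
    rw [Complex.exp_sub, this, div_self (Complex.exp_ne_zero _)]
  -- a left inverse of the coercion
  let κ : OnePoint ℂ → ℂ := fun x => x.elim 0 id
  have hκ : ∀ u : ℂ, κ (c u) = u := fun u => rfl
  have hκc : ∀ u : ℂ, ContinuousAt κ (c u) := by
    intro u
    rw [← hce.continuousAt_iff]
    exact continuousAt_id
  have hWT : ∀ x ∈ W, κ (x : OnePoint ℂ) ∈ T ∩ (ball z r₁)ᶜ ∧ c (κ x) = x := by
    rintro x ⟨u, ⟨hu1, hu2⟩, hux⟩
    rw [← hux, hκ]
    refine ⟨⟨⟨ball_subset_closedBall hu1, ?_⟩, fun h => hu2 (ball_subset_closedBall h)⟩, rfl⟩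
    change c u ∈ frontier D
    rw [hux]; exact x.2
  have hκW : ContinuousOn (fun x : frontier D => κ (x : OnePoint ℂ)) W := by
    intro x hx
    apply ContinuousAt.continuousWithinAt
    have := hκc (κ x)
    rw [(hWT x hx).2] at this
    exact this.comp continuous_subtype_val.continuousAt
  have hconst : ∀ j, ∀ x y : frontier D, y ∈ connectedComponentIn W x → x ∈ W →
      g j (κ x) - h j (κ x) = g j (κ y) - h j (κ y) := by
    intro j x y hy hx
    have hsub := connectedComponentIn_subset W x
    refine exp_const (A := connectedComponentIn W x)
      (f := fun x : frontier D => g j (κ x) - h j (κ x))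
      isPreconnected_connectedComponentIn ?_ ?_ (mem_connectedComponentIn hx) hy
    · have : ContinuousOn (fun u => g j u - h j u) (T ∩ (ball z r₁)ᶜ) :=
        ((hgc j).mono inter_subset_left).sub ((hhc j).mono inter_subset_right)
      exact (this.comp hκW fun x hx => (hWT x hx).1).mono hsub
    · intro y hy
      exact hgh1 j _ (hWT y (hsub hy)).1
  have hint : ∀ j, ∀ x : t, ∃ n : ℤ, g j (κ x) - h j (κ x) = n * (2 * Real.pi * Complex.I) := by
    intro j x
    exact Complex.exp_eq_one_iff.1 (hgh1 j _ (hWT x.1 (hQW (htQ x.1 x.2))).1)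
  choose a ha using hint
  obtain ⟨m, hm, i, hmi⟩ : ∃ m : Fin N → ℤ, ∑ j, m j • a j = 0 ∧ ∃ i, m i ≠ 0 := by
    rw [← Fintype.not_linearIndependent_iff]
    intro hli
    have := hli.fintype_card_le_finrank
    simp [N] at this
  -- the two logarithms agree on the circle
  let G : ℂ → ℂ := fun u => ∑ j, m j * g j u
  let H : ℂ → ℂ := fun u => ∑ j, m j * h j u
  have hGH : ∀ u ∈ S' ∩ sphere z s, G u = H u := by
    intro u hu
    have hy : (⟨c u, hu.1⟩ : frontier D) ∈ Q := ⟨u, hu.2, rfl⟩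
    have := ht hy
    simp only [mem_iUnion] at this
    obtain ⟨x, hxt, hxy⟩ := this
    rw [← sub_eq_zero]
    simp only [G, H]
    rw [← Finset.sum_sub_distrib]
    have : ∀ j, m j * g j u - m j * h j u =
        ((m j * a j ⟨x, hxt⟩ : ℤ) : ℂ) * (2 * Real.pi * Complex.I) := by
      intro j
      have e1 := hconst j x _ hxy (hQW (htQ x hxt))
      have e2 := ha j ⟨x, hxt⟩
      simp only [hκ] at e1
      simp only at e2
      rw [e1] at e2
      push_cast
      rw [← mul_sub, e2]
      ring
    rw [Finset.sum_congr rfl fun j _ => this j, ← Finset.sum_mul, ← Int.cast_sum]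
    have e3 := congrFun hm ⟨x, hxt⟩
    simp only [Finset.sum_apply, Pi.smul_apply, smul_eq_mul, Pi.zero_apply] at e3
    rw [e3]; simp
  let A : Set ℂ := closedBall z s ∩ S'
  have hA : IsClosed A := isClosed_closedBall.inter hS'
  have hAT : A ⊆ T := fun u hu => ⟨closedBall_subset_closedBall hs2.le hu.1, hu.2⟩
  have hsph : sphere z s ⊆ (ball z r₁)ᶜ := by
    intro u hu h
    rw [mem_sphere] at hu; rw [mem_ball] at h; linarith
  let L : ℂ → ℂ := fun u => if u ∈ sphere z s then H u else G u
  have hLA : ∀ u ∈ A, L u = G u := by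
    intro u hu
    by_cases hus : u ∈ sphere z s
    · simp only [L, if_pos hus]; exact (hGH u ⟨hu.2, hus⟩).symm
    · simp only [L, if_neg hus]
  have hLs : ∀ u ∈ sphere z s, L u = H u := fun u hu => by simp only [L, if_pos hu]
  have hGc : ContinuousOn G T := continuousOn_finsetSum _ fun j _ => continuousOn_const.mul (hgc j)
  have hHc : ContinuousOn H (ball z r₁)ᶜ :=
    continuousOn_finsetSum _ fun j _ => continuousOn_const.mul (hhc j)
  have hL : ContinuousOn L (A ∪ sphere z s) :=
    ((hGc.mono hAT).congr hLA).union_of_isClosed ((hHc.mono hsph).congr hLs) hA isClosed_sphere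
  -- the component
  let U : Set ℂ := ball z s ∩ S'ᶜ
  have hU : IsOpen U := isOpen_ball.inter hS'.isOpen_compl
  let V : Set ℂ := connectedComponentIn U (p i)
  have hqU : ∀ n, q n ∈ U := by
    intro n
    refine ⟨ball_subset_ball hs1.le (hqb n), fun h => hSD _ h (hqD n)⟩
  have hVU : V ⊆ U := connectedComponentIn_subset U _
  have hVo : IsOpen V := hU.connectedComponentIn
  have hfrV : frontier V ⊆ A ∪ sphere z s := by
    intro u hu
    have h3 := frontier_comp hU (p i) hu
    have h4 : u ∈ closedBall z s := closure_ball_subset_closedBall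
      (closure_mono (hVU.trans inter_subset_left) (frontier_subset_closure hu))
    by_cases h5 : u ∈ S'
    · exact Or.inl ⟨h4, h5⟩
    · right
      have h6 : u ∉ ball z s := fun h => h3 ⟨h, h5⟩
      rw [mem_closedBall] at h4
      rw [mem_ball, not_lt] at h6
      exact le_antisymm h4 h6
  have hVD : c '' V ⊆ D := by
    refine IsPreconnected.subset_of_closure_inter_subset
      (isPreconnected_connectedComponentIn.image c hc.continuousOn) hD
      ⟨c (p i), mem_image_of_mem c (mem_connectedComponentIn (hqU _)), hqD _⟩ ?_
    rintro _ ⟨hx, u, hu, rfl⟩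
    by_contra hn
    refine (hVU hu).2 ?_
    change c u ∈ frontier D
    rw [hD.frontier_eq]; exact ⟨hx, hn⟩
  have hpi : p i ∈ V := mem_connectedComponentIn (hqU _)
  have hnV : ∀ n, q n ∈ V → n = i + 1 := by
    intro n hn
    apply hqinj
    apply (connectedComponentIn_eq _).symm
    refine IsPreconnected.subset_connectedComponentIn
      (isPreconnected_connectedComponentIn.image c hc.continuousOn)
      (mem_image_of_mem c hpi) ?_ (mem_image_of_mem c hn)
    exact subset_inter hVD (image_mono fun u hu => ball_subset_ball hs2.le (hVU hu).1)
  have hncl : ∀ n, q n ∈ closure V → n = i + 1 := by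
    intro n hn
    by_cases hV : q n ∈ V
    · exact hnV n hV
    · exfalso
      have : q n ∈ frontier V := by rw [hVo.frontier_eq]; exact ⟨hn, hV⟩
      rcases hfrV this with h | h
      · exact (hqU n).2 h.2
      · exact hsph h (hqb n)
  refine sep_false p b m i hmi hVo (hA.union isClosed_sphere) hfrV hs0
    (hVU.trans inter_subset_left) hpi ?_ ?_ L hL ?_
  · intro j hj h
    apply hj
    have := hncl _ h
    exact Fin.ext (by omega)
  · intro h
    have := hncl _ h
    omega
  · rintro u (hu | hu)
    · rw [hLA u hu]
      exact prod_log p b m u (hb1 u (hAT hu)) _ fun j => hg j u (hAT hu)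
    · rw [hLs u hu]
      exact prod_log p b m u (hb2 u (hsph hu)) _ fun j => hh j u (hsph hu)
end

section
/- Janiszewski's theorem: Let A₁, A₂ ⊆ Ĉ be closed sets such that A₁ ∩ A₂ is connected. If two points a, b ∈ Ĉ \ (A₁ ∪ A₂) lie in the same connected component of Ĉ \ A₁ and in the same connected component of Ĉ \ A₂, then they lie in the same connected component of Ĉ \ (A₁ ∪ A₂). -/
open Set Filter Metric Topology

namespace Jan

/-- `f / g` has a continuous logarithm on `S`. -/
def LogEq (S : Set ℂ) (f g : ℂ → ℂ) : Prop :=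
  ∃ h : ℂ → ℂ, ContinuousOn h S ∧ ∀ z ∈ S, f z = Complex.exp (h z) * g z

lemma LogEq.symm {S : Set ℂ} {f g : ℂ → ℂ} (H : LogEq S f g) : LogEq S g f := by
  obtain ⟨h, hc, hh⟩ := H
  refine ⟨fun z => - h z, hc.neg, fun z hz => ?_⟩
  rw [hh z hz, ← mul_assoc, ← Complex.exp_add]; simp

lemma LogEq.trans {S : Set ℂ} {f g k : ℂ → ℂ} (H : LogEq S f g) (H' : LogEq S g k) :
    LogEq S f k := by
  obtain ⟨h, hc, hh⟩ := H
  obtain ⟨h', hc', hh'⟩ := H'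
  refine ⟨fun z => h z + h' z, hc.add hc', fun z hz => ?_⟩
  rw [hh z hz, hh' z hz, ← mul_assoc, ← Complex.exp_add]

lemma LogEq.of_near {S : Set ℂ} {f g : ℂ → ℂ} (hf : ContinuousOn f S) (hg : ContinuousOn g S)
    (H : ∀ z ∈ S, ‖f z - g z‖ < ‖g z‖) : LogEq S f g := by
  have hg0 : ∀ z ∈ S, g z ≠ 0 := fun z hz h0 => by
    have := H z hz
    rw [h0, norm_zero] at this
    exact absurd this (not_lt.2 (norm_nonneg _))
  have hs : ∀ z ∈ S, f z / g z ∈ Complex.slitPlane := fun z hz => by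
    apply Complex.ball_one_subset_slitPlane
    rw [mem_ball, dist_eq_norm]
    have : f z / g z - 1 = (f z - g z) / g z := by
      field_simp [hg0 z hz]
    rw [this, norm_div, div_lt_one (norm_pos_iff.2 (hg0 z hz))]
    exact H z hz
  refine ⟨fun z => Complex.log (f z / g z), (hf.div hg hg0).clog hs, fun z hz => ?_⟩
  rw [Complex.exp_log (Complex.slitPlane_ne_zero (hs z hz)), div_mul_cancel₀ _ (hg0 z hz)]

lemma LogEq.of_const {S : Set ℂ} {c d : ℂ} (hc : c ≠ 0) (hd : d ≠ 0) :
    LogEq S (fun _ => c) (fun _ => d) := by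
  refine ⟨fun _ => Complex.log (c / d), continuousOn_const, fun z _ => ?_⟩
  rw [Complex.exp_log (div_ne_zero hc hd), div_mul_cancel₀ _ hd]

lemma LogEq.eventually {T : Type*} [TopologicalSpace T] {S : Set ℂ} (hS : IsCompact S)
    {F : T → ℂ → ℂ} (hF : Continuous (fun p : T × ℂ => F p.1 p.2)) (t₀ : T)
    (h0 : ∀ z ∈ S, F t₀ z ≠ 0) : ∀ᶠ t in 𝓝 t₀, LogEq S (F t₀) (F t) := by
  have hFt : ∀ t, Continuous (F t) := fun t => hF.comp (by fun_prop : Continuous fun z => (t, z))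
  have key : ∀ᶠ t in 𝓝 t₀, ∀ z ∈ S, ‖F t z - F t₀ z‖ < ‖F t₀ z‖ := by
    apply hS.eventually_forall_of_forall_eventually
    intro z hz
    have c1 : Continuous (fun p : T × ℂ => ‖F p.1 p.2 - F t₀ p.2‖) :=
      (hF.sub ((hFt t₀).comp continuous_snd)).norm
    have c2 : Continuous (fun p : T × ℂ => ‖F t₀ p.2‖) := ((hFt t₀).comp continuous_snd).norm
    apply c1.continuousAt.eventually_lt c2.continuousAt
    simpa using h0 z hz
  filter_upwards [key] with t ht
  exact (LogEq.of_near (hFt t).continuousOn (hFt t₀).continuousOn ht).symm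

lemma const_of_exp {X : Type*} [TopologicalSpace X] {S : Set X} (hS : IsPreconnected S)
    {d : X → ℂ} (hd : ContinuousOn d S)
    (h : ∀ x ∈ S, ∀ y ∈ S, Complex.exp (d x) = Complex.exp (d y)) :
    ∀ x ∈ S, ∀ y ∈ S, d x = d y := by
  intro x hx y hy
  refine hS.induction₂ (fun x y => d x = d y) ?_ (fun x y z _ _ _ h1 h2 => h1.trans h2)
    (fun x y _ _ h => h.symm) hx hy
  intro x hx
  have h1 : ∀ᶠ y in 𝓝[S] x, dist (d y) (d x) < 2 * Real.pi :=
    (Metric.tendsto_nhds.1 (hd x hx)) _ (by positivity)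
  filter_upwards [h1, self_mem_nhdsWithin] with y hy hyS
  obtain ⟨n, hn⟩ := Complex.exp_eq_exp_iff_exists_int.1 (h y hyS x hx)
  rw [hn, dist_eq_norm, add_sub_cancel_left] at hy
  have : ‖(n : ℂ) * (2 * Real.pi * Complex.I)‖ = |(n : ℝ)| * (2 * Real.pi) := by
    simp [abs_of_pos Real.pi_pos]
  rw [this] at hy
  have hn1 : |(n : ℝ)| < 1 := by
    have := Real.pi_pos
    by_contra hcon
    push Not at hcon
    nlinarith
  have hn0 : n = 0 := by
    have : |n| < 1 := by exact_mod_cast hn1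
    exact Int.abs_lt_one_iff.1 this
  rw [hn, hn0]; simp

lemma no_retract (G : ℂ → ℂ) (hG : Continuous G) (h0 : ∀ z, G z ≠ 0) (R : ℝ)
    (hR : ∀ z, R ≤ ‖z‖ → G z = z) : False := by
  obtain ⟨r, hr, hr0⟩ : ∃ r : ℝ, R ≤ r ∧ 0 < r := ⟨max R 1, le_max_left _ _, by positivity⟩
  have key : LogEq (sphere 0 1) (fun z => G ((r : ℝ) * z)) (fun z => G ((0 : ℝ) * z)) := by
    refine (isPreconnected_univ (α := ℝ)).induction₂
      (fun s t => LogEq (sphere 0 1) (fun z => G ((s : ℝ) * z)) (fun z => G ((t : ℝ) * z)))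
      ?_ (fun x y z _ _ _ h1 h2 => h1.trans h2)
      (fun x y _ _ h => h.symm) (mem_univ _) (mem_univ _)
    intro s _
    rw [nhdsWithin_univ]
    refine LogEq.eventually (F := fun (t : ℝ) z => G ((t : ℝ) * z)) (isCompact_sphere _ _) ?_ s
      (fun z _ => h0 _)
    exact hG.comp (by fun_prop)
  obtain ⟨h, hc, hh⟩ := key
  have hm : ∀ θ : ℝ, Complex.exp (θ * Complex.I) ∈ sphere (0 : ℂ) 1 := fun θ => by
    simp [Complex.norm_exp_ofReal_mul_I]
  have e1 : ∀ θ : ℝ, (r : ℂ) * Complex.exp (θ * Complex.I)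
      = Complex.exp (h (Complex.exp (θ * Complex.I))) * G 0 := fun θ => by
    have := hh _ (hm θ)
    beta_reduce at this
    rw [hR _ (by simp [Complex.norm_exp_ofReal_mul_I, abs_of_pos hr0, hr])] at this
    simpa using this
  have e2 : ∀ θ : ℝ, Complex.exp (h (Complex.exp (θ * Complex.I)) - θ * Complex.I) = r / G 0 := by
    intro θ
    rw [Complex.exp_sub, div_eq_div_iff (Complex.exp_ne_zero _) (h0 0), ← e1]
  have cont : Continuous fun θ : ℝ => h (Complex.exp (θ * Complex.I)) - θ * Complex.I := by
    refine Continuous.sub ?_ (by fun_prop)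
    exact hc.comp_continuous (by fun_prop) hm
  have := const_of_exp (isPreconnected_univ (α := ℝ)) cont.continuousOn
    (fun x _ y _ => by rw [e2, e2]) 0 (mem_univ _) (2 * Real.pi) (mem_univ _)
  simp only [Complex.ofReal_zero, zero_mul, Complex.exp_zero, sub_zero, Complex.ofReal_mul,
    Complex.ofReal_ofNat, Complex.exp_two_pi_mul_I] at this
  exact Complex.two_pi_I_ne_zero (by linear_combination this)

/-- the comparison functions -/
noncomputable def gg (p : OnePoint ℂ) (z : ℂ) : ℂ := p.elim 1 (fun w => z - w)

lemma gg_coe (w z : ℂ) : gg (w : OnePoint ℂ) z = z - w := rfl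
lemma gg_infty (z : ℂ) : gg OnePoint.infty z = 1 := rfl

lemma compact_pre {A : Set (OnePoint ℂ)} (hA : IsClosed A) (hi : OnePoint.infty ∉ A) :
    IsCompact ((↑) ⁻¹' A : Set ℂ) :=
  ((OnePoint.isClosed_iff_of_notMem hi).1 hA).2

lemma dir1 {A : Set (OnePoint ℂ)} (hA : IsClosed A) (hi : OnePoint.infty ∉ A) (a : ℂ)
    (hc : OnePoint.infty ∈ connectedComponentIn Aᶜ (a : OnePoint ℂ)) :
    LogEq ((↑) ⁻¹' A : Set ℂ) (fun z => z - a) (fun _ => 1) := by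
  have hK := compact_pre hA hi
  have haA : (a : OnePoint ℂ) ∈ Aᶜ := by
    by_contra h
    rw [connectedComponentIn_eq_empty h] at hc
    exact hc
  refine (isPreconnected_connectedComponentIn (F := Aᶜ) (x := (a : OnePoint ℂ))).induction₂
      (fun s t => LogEq (((↑) : ℂ → OnePoint ℂ) ⁻¹' A) (gg s) (gg t))
      ?_ (fun x y z _ _ _ h1 h2 => h1.trans h2)
      (fun x y _ _ h => h.symm) (mem_connectedComponentIn haA) hc
  intro p hp
  have hpA := connectedComponentIn_subset _ _ hp
  apply mem_nhdsWithin_of_mem_nhds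
  induction p using OnePoint.rec with
  | infty =>
    obtain ⟨M, hM⟩ := hK.isBounded.exists_norm_le
    rw [OnePoint.nhds_infty_eq]
    refine ⟨?_, ?_⟩
    · rw [mem_map, coclosedCompact_eq_cocompact, ← Metric.cobounded_eq_cocompact]
      filter_upwards [tendsto_norm_cobounded_atTop.eventually_gt_atTop (max M 0)] with w hw
      have hw0 : w ≠ 0 := norm_pos_iff.1 ((le_max_right _ _).trans_lt hw)
      refine LogEq.trans (g := fun _ => -w) (LogEq.of_const one_ne_zero (neg_ne_zero.2 hw0)) ?_
      refine (LogEq.of_near (by show ContinuousOn (fun z => z - w) _; fun_prop)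
        continuousOn_const fun z hz => ?_).symm
      rw [gg_coe]
      simpa using (hM z hz).trans_lt ((le_max_left _ _).trans_lt hw)
    · exact LogEq.of_const one_ne_zero one_ne_zero
  | coe w =>
    rw [OnePoint.nhds_coe_eq]
    refine LogEq.eventually (F := fun (t : ℂ) z => z - t) hK (by fun_prop) w ?_
    intro z hz h
    rw [sub_eq_zero] at h
    exact hpA (h ▸ hz)

lemma dir2 {A : Set (OnePoint ℂ)} (hA : IsClosed A) (hi : OnePoint.infty ∉ A) (a : ℂ)
    (haA : (a : OnePoint ℂ) ∉ A)
    (hl : LogEq ((↑) ⁻¹' A : Set ℂ) (fun z => z - a) (fun _ => 1)) :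
    OnePoint.infty ∈ connectedComponentIn Aᶜ (a : OnePoint ℂ) := by
  set K : Set ℂ := (↑) ⁻¹' A with hKdef
  have hKc : IsClosed K := hA.preimage OnePoint.continuous_coe
  set U := connectedComponentIn Kᶜ a with hU
  have haK : a ∈ Kᶜ := haA
  have haU : a ∈ U := mem_connectedComponentIn haK
  have hUo : IsOpen U := hKc.isOpen_compl.connectedComponentIn
  have hUK : U ⊆ Kᶜ := connectedComponentIn_subset _ _
  have hUp : IsPreconnected U := isPreconnected_connectedComponentIn
  by_cases hb : Bornology.IsBounded U
  · exfalso
    obtain ⟨M, hM⟩ := hb.exists_norm_le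
    obtain ⟨h, hc, hh⟩ := hl
    have hfr : frontier U ⊆ K := by
      intro z hz
      by_contra hzK
      have hVo : IsOpen (connectedComponentIn Kᶜ z) := hKc.isOpen_compl.connectedComponentIn
      obtain ⟨w, hw1, hw2⟩ := mem_closure_iff.1 hz.1 _ hVo (mem_connectedComponentIn hzK)
      have e1 := connectedComponentIn_eq hw1
      have e2 := connectedComponentIn_eq hw2
      apply hz.2
      rw [hUo.interior_eq, hU, e2, ← e1]
      exact mem_connectedComponentIn hzK
    obtain ⟨H, hH⟩ : ∃ H : C(ℂ, ℂ), ∀ z ∈ K, H z = h z := by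
      obtain ⟨f, hf⟩ := ContinuousMap.exists_restrict_eq hKc
        (⟨fun z : K => (h z).re, Complex.continuous_re.comp hc.domRestrict⟩ : C(K, ℝ))
      obtain ⟨g, hg⟩ := ContinuousMap.exists_restrict_eq hKc
        (⟨fun z : K => (h z).im, Complex.continuous_im.comp hc.domRestrict⟩ : C(K, ℝ))
      refine ⟨⟨fun z => f z + g z * Complex.I, by fun_prop⟩, fun z hz => ?_⟩
      have h1 : f z = (h z).re := congrArg (fun F : C(K, ℝ) => F ⟨z, hz⟩) hf
      have h2 : g z = (h z).im := congrArg (fun F : C(K, ℝ) => F ⟨z, hz⟩) hg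
      simp [h1, h2, Complex.re_add_im]
    classical
    let G : ℂ → ℂ := fun z => if z ∈ U then Complex.exp (H z) else z - a
    have hGc : Continuous G := by
      refine Continuous.if ?_ (by fun_prop) (by fun_prop)
      intro z hz
      have hzK := hfr hz
      rw [hH z hzK]
      have := hh z hzK
      simpa using this.symm
    have hG0 : ∀ z, G z ≠ 0 := by
      intro z
      by_cases hz : z ∈ U
      · simp only [G, if_pos hz]; exact Complex.exp_ne_zero _
      · simp only [G, if_neg hz]
        intro h
        rw [sub_eq_zero] at h
        exact hz (h ▸ haU)
    refine no_retract (fun z => G (z + a)) (by fun_prop) (fun z => hG0 _) (M + ‖a‖ + 1) ?_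
    intro z hz
    have : z + a ∉ U := by
      intro hzU
      have h1 := hM _ hzU
      have h2 : ‖z‖ ≤ ‖z + a‖ + ‖a‖ := by
        simpa using norm_sub_le (z + a) a
      linarith
    simp [G, this]
  · have hcl : OnePoint.infty ∈ closure ((↑) '' U : Set (OnePoint ℂ)) := by
      rw [mem_closure_iff_frequently, OnePoint.nhds_infty_eq]
      intro hev
      rw [eventually_sup] at hev
      apply hb
      have h1 := hev.1
      rw [eventually_map, coclosedCompact_eq_cocompact, ← Metric.cobounded_eq_cocompact] at h1
      rw [← Bornology.isCobounded_compl_iff]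
      show Uᶜ ∈ Bornology.cobounded ℂ
      filter_upwards [h1] with x hx hxU
      exact hx ⟨x, hxU, rfl⟩
    have hp : IsPreconnected (insert OnePoint.infty ((↑) '' U : Set (OnePoint ℂ))) :=
      (hUp.image _ OnePoint.continuous_coe.continuousOn).subset_closure (subset_insert _ _)
        (insert_subset hcl subset_closure)
    refine hp.subset_connectedComponentIn (mem_insert_of_mem _ ⟨a, haU, rfl⟩) ?_
      (mem_insert _ _)
    rintro x (rfl | ⟨z, hz, rfl⟩)
    · exact hi
    · exact hUK hz

lemma main_infty (A₁ A₂ : Set (OnePoint ℂ)) (h₁ : IsClosed A₁) (h₂ : IsClosed A₂)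
    (hconn : IsPreconnected (A₁ ∩ A₂)) (a : ℂ)
    (ha : (a : OnePoint ℂ) ∉ A₁ ∪ A₂) (hb : OnePoint.infty ∉ A₁ ∪ A₂)
    (hc₁ : OnePoint.infty ∈ connectedComponentIn A₁ᶜ (a : OnePoint ℂ))
    (hc₂ : OnePoint.infty ∈ connectedComponentIn A₂ᶜ (a : OnePoint ℂ)) :
    OnePoint.infty ∈ connectedComponentIn (A₁ ∪ A₂)ᶜ (a : OnePoint ℂ) := by
  have hi1 : OnePoint.infty ∉ A₁ := fun h => hb (Or.inl h)
  have hi2 : OnePoint.infty ∉ A₂ := fun h => hb (Or.inr h)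
  apply dir2 (h₁.union h₂) hb a ha
  obtain ⟨f, hf, hf'⟩ := dir1 h₁ hi1 a hc₁
  obtain ⟨g, hg, hg'⟩ := dir1 h₂ hi2 a hc₂
  rw [preimage_union]
  set K₁ : Set ℂ := (↑) ⁻¹' A₁
  set K₂ : Set ℂ := (↑) ⁻¹' A₂
  have hK1 : IsClosed K₁ := h₁.preimage OnePoint.continuous_coe
  have hK2 : IsClosed K₂ := h₂.preimage OnePoint.continuous_coe
  have hp : IsPreconnected (K₁ ∩ K₂) := by
    have := hconn.preimage_of_isOpenMap OnePoint.coe_injective OnePoint.isOpenMap_coe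
      (by
        intro x hx
        obtain ⟨y, hy⟩ := OnePoint.ne_infty_iff_exists.1
          (fun h : x = OnePoint.infty => hi1 (h ▸ hx.1))
        exact ⟨y, hy⟩)
    simpa only [preimage_inter] using this
  have hexp : ∀ z ∈ K₁ ∩ K₂, Complex.exp (f z) = Complex.exp (g z) := by
    intro z hz
    have e1 := hf' z hz.1
    have e2 := hg' z hz.2
    simp only [mul_one] at e1 e2
    rw [← e1, ← e2]
  have hexp1 : ∀ z ∈ K₁ ∩ K₂, Complex.exp (f z - g z) = 1 := by
    intro z hz
    rw [Complex.exp_sub, hexp z hz, div_self (Complex.exp_ne_zero _)]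
  obtain ⟨c, hc1, hc⟩ : ∃ c : ℂ, Complex.exp c = 1 ∧ ∀ z ∈ K₁ ∩ K₂, f z = g z + c := by
    rcases (K₁ ∩ K₂).eq_empty_or_nonempty with he | ⟨w, hw⟩
    · exact ⟨0, by simp, by simp [he]⟩
    · refine ⟨f w - g w, hexp1 w hw, fun z hz => ?_⟩
      have := const_of_exp hp (d := fun z => f z - g z)
        ((hf.mono inter_subset_left).sub (hg.mono inter_subset_right))
        (fun x hx y hy => by rw [hexp1 x hx, hexp1 y hy]) z hz w hw
      rw [← this]; ring
  classical
  have q1 : EqOn (fun z => if z ∈ K₁ then f z else g z + c) f K₁ := fun z hz => if_pos hz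
  have q2 : EqOn (fun z => if z ∈ K₁ then f z else g z + c) (fun z => g z + c) K₂ := by
    intro z hz
    by_cases h : z ∈ K₁
    · simp only [if_pos h]; exact hc z ⟨h, hz⟩
    · simp only [if_neg h]
  refine ⟨fun z => if z ∈ K₁ then f z else g z + c, ?_, ?_⟩
  · exact (hf.congr q1).union_of_isClosed ((hg.add continuousOn_const).congr q2) hK1 hK2
  · rintro z (hz | hz)
    · rw [q1 hz]; exact hf' z hz
    · rw [q2 hz]
      simp only [Complex.exp_add, hc1, mul_one]
      simpa using hg' z hz

/-- inversion centred at `b` -/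
noncomputable def inv (x : OnePoint ℂ) : OnePoint ℂ :=
  x.elim ((0 : ℂ) : OnePoint ℂ) (fun z => if z = 0 then OnePoint.infty else ((z⁻¹ : ℂ) : OnePoint ℂ))

lemma inv_infty : inv OnePoint.infty = ((0 : ℂ) : OnePoint ℂ) := rfl
lemma inv_coe (z : ℂ) :
    inv (z : OnePoint ℂ) = if z = 0 then OnePoint.infty else ((z⁻¹ : ℂ) : OnePoint ℂ) := rfl

lemma inv_inv (x : OnePoint ℂ) : inv (inv x) = x := by
  induction x using OnePoint.rec with
  | infty => simp [inv_infty, inv_coe]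
  | coe z =>
    by_cases h : z = 0
    · simp [h, inv_coe, inv_infty]
    · simp [h, inv_coe]

lemma inv_cont : Continuous inv := by
  rw [continuous_iff_continuousAt]
  intro x
  induction x using OnePoint.rec with
  | infty =>
    rw [OnePoint.continuousAt_infty', coclosedCompact_eq_cocompact,
      ← Metric.cobounded_eq_cocompact, inv_infty]
    have h1 : Tendsto (fun z : ℂ => ((z⁻¹ : ℂ) : OnePoint ℂ)) (Bornology.cobounded ℂ)
        (𝓝 ((0 : ℂ) : OnePoint ℂ)) :=
      (OnePoint.continuous_coe.tendsto _).comp tendsto_inv₀_cobounded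
    refine h1.congr' ?_
    filter_upwards [tendsto_norm_cobounded_atTop.eventually_gt_atTop 0] with z hz
    simp [inv_coe, norm_pos_iff.1 hz]
  | coe z =>
    rw [OnePoint.continuousAt_coe]
    by_cases h : z = 0
    · subst h
      rw [continuousAt_iff_punctured_nhds]
      have h1 : Tendsto (fun z : ℂ => ((z⁻¹ : ℂ) : OnePoint ℂ)) (𝓝[≠] 0)
          (𝓝 (OnePoint.infty : OnePoint ℂ)) := by
        refine Tendsto.comp (OnePoint.tendsto_coe_infty (X := ℂ)) ?_
        rw [coclosedCompact_eq_cocompact, ← Metric.cobounded_eq_cocompact]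
        exact tendsto_inv₀_nhdsNE_zero
      have h2 : (inv ∘ ((↑) : ℂ → OnePoint ℂ)) 0 = OnePoint.infty := by simp [inv_coe]
      rw [h2]
      refine h1.congr' ?_
      filter_upwards [self_mem_nhdsWithin] with z hz
      have hz : z ≠ 0 := hz
      simp [inv_coe, hz]
    · have h1 : ContinuousAt (fun z : ℂ => ((z⁻¹ : ℂ) : OnePoint ℂ)) z :=
        OnePoint.continuous_coe.continuousAt.comp (continuousAt_inv₀ h)
      refine h1.congr ?_
      filter_upwards [isOpen_ne.mem_nhds h] with w hw
      have hw : w ≠ 0 := hw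
      simp [inv_coe, hw]

noncomputable def invH : OnePoint ℂ ≃ₜ OnePoint ℂ where
  toFun := inv
  invFun := inv
  left_inv := inv_inv
  right_inv := inv_inv
  continuous_toFun := inv_cont
  continuous_invFun := inv_cont

lemma exists_homeo (b : OnePoint ℂ) : ∃ e : OnePoint ℂ ≃ₜ OnePoint ℂ, e b = OnePoint.infty := by
  induction b using OnePoint.rec with
  | infty => exact ⟨Homeomorph.refl _, rfl⟩
  | coe b =>
    refine ⟨(Homeomorph.onePointCongr (Homeomorph.addRight (-b))).trans invH, ?_⟩
    show inv (((b + -b : ℂ)) : OnePoint ℂ) = _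
    simp [inv_coe]

end Jan

/-- Janiszewski's theorem on the Riemann sphere `Ĉ = OnePoint ℂ`: if `A₁, A₂` are
closed with connected intersection, and two points are separated neither by `A₁`
nor by `A₂`, then they are not separated by `A₁ ∪ A₂`. -/
theorem stmt_4 (A₁ A₂ : Set (OnePoint ℂ)) (h₁ : IsClosed A₁) (h₂ : IsClosed A₂)
    (hconn : IsPreconnected (A₁ ∩ A₂)) (a b : OnePoint ℂ)
    (ha : a ∉ A₁ ∪ A₂) (hb : b ∉ A₁ ∪ A₂)
    (hc₁ : b ∈ connectedComponentIn A₁ᶜ a)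
    (hc₂ : b ∈ connectedComponentIn A₂ᶜ a) :
    b ∈ connectedComponentIn (A₁ ∪ A₂)ᶜ a := by
  by_cases hab : a = b
  · subst hab; exact mem_connectedComponentIn ha
  obtain ⟨e, he⟩ := Jan.exists_homeo b
  have hmem : ∀ A : Set (OnePoint ℂ), a ∉ A → (b ∈ connectedComponentIn Aᶜ a ↔
      OnePoint.infty ∈ connectedComponentIn (e '' A)ᶜ (e a)) := by
    intro A haA
    rw [← image_compl_eq e.bijective, ← e.image_connectedComponentIn haA, ← he,
      e.injective.mem_set_image]
  obtain ⟨a', ha'⟩ := OnePoint.ne_infty_iff_exists.1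
    (fun h : e a = OnePoint.infty => hab (e.injective (h.trans he.symm)))
  rw [hmem _ (fun h => ha (Or.inl h))] at hc₁
  rw [hmem _ (fun h => ha (Or.inr h))] at hc₂
  rw [hmem _ ha, image_union]
  rw [← ha'] at hc₁ hc₂ ⊢
  refine Jan.main_infty _ _ (e.isClosed_image.2 h₁) (e.isClosed_image.2 h₂) ?_ a' ?_ ?_ hc₁ hc₂
  · rw [← image_inter e.injective]
    exact hconn.image _ e.continuous.continuousOn
  · rw [ha', ← image_union, e.injective.mem_set_image]; exact ha
  · rw [← he, ← image_union, e.injective.mem_set_image]; exact hb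
end
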